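/- Let p ≥ 1, α, β : Fin (p+1) → ℕ, and let a_k ∈ ℕ be defined by the power series expansion ∑_{k≥0} a_k x^k = ∏_{i=0}^{p}(α_i + β_i x)/(1 − x)^p (valid for |x| < 1). Let l be a positive integer and q ∈ ℂ with 0 < |q| < 1. Then the family (n, k) ↦ a_k · q^{l(n² + (2n+1)k)} over ℕ × ℕ is summable and ∑_{(n,k)∈ℕ×ℕ} a_k · q^{l(n² + (2n+1)k)} = ∑_{n≥0} q^{l n²} · ∏_{i=0}^{p} (α_i + β_i q^{l(2n+1)}) / (1 − q^{l(2n+1)})^p. -/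

import Mathlib

open Finset

/-!
Absolute convergence on `ℕ × ℕ` comes from comparison with the product of a geometric series in
`n` and the power series at `q`, because `n² + (2n + 1)k = k + n(n + 2k)` and `n ≤ n(n + 2k)`.
Summing over `k` first then evaluates the generating function of `a` at `q ^ (2n + 1)`, with the
factor `q ^ n²` pulled out. Replacing `q` by `q ^ l` gives the `l`-th power.
-/

theorem summable_norm_mul_pow_sq_add {R : Type*} [SeminormedRing R] [NormOneClass R]
    {a : ℕ → R} {q : R} (hq : ‖q‖ < 1) (ha : Summable fun k => ‖a k * q ^ k‖) :
    Summable fun nk : ℕ × ℕ => ‖a nk.2 * q ^ (nk.1 ^ 2 + (2 * nk.1 + 1) * nk.2)‖ := by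
  have hgeom : Summable fun n : ℕ => ‖q‖ ^ n :=
    summable_geometric_of_lt_one (norm_nonneg q) hq
  refine .of_nonneg_of_le (fun _ => norm_nonneg _) ?_
    (hgeom.mul_of_nonneg ha (fun _ => by positivity) (fun _ => norm_nonneg _))
  rintro ⟨n, k⟩
  have hexp : n ≤ n * (n + 2 * k) := by
    rcases n.eq_zero_or_pos with rfl | hn
    · simp
    · exact Nat.le_mul_of_pos_right n (by lia)
  calc ‖a k * q ^ (n ^ 2 + (2 * n + 1) * k)‖
      = ‖a k * q ^ k * q ^ (n * (n + 2 * k))‖ := by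
        rw [mul_assoc, ← pow_add]
        ring_nf
    _ ≤ ‖a k * q ^ k‖ * ‖q ^ (n * (n + 2 * k))‖ := norm_mul_le _ _
    _ ≤ ‖a k * q ^ k‖ * ‖q‖ ^ n := by
        gcongr
        exact (norm_pow_le q _).trans (pow_le_pow_of_le_one (norm_nonneg q) hq.le hexp)
    _ = ‖q‖ ^ n * ‖a k * q ^ k‖ := mul_comm _ _

theorem tsum_mul_pow_sq_add {𝕜 : Type*} [NormedField 𝕜] [CompleteSpace 𝕜]
    {a : ℕ → 𝕜} {q : 𝕜} (hq : ‖q‖ < 1) (ha : Summable fun k => ‖a k * q ^ k‖) :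
    ∑' nk : ℕ × ℕ, a nk.2 * q ^ (nk.1 ^ 2 + (2 * nk.1 + 1) * nk.2) =
      ∑' n : ℕ, q ^ n ^ 2 * ∑' k : ℕ, a k * (q ^ (2 * n + 1)) ^ k := by
  rw [(summable_norm_mul_pow_sq_add hq ha).of_norm.tsum_prod]
  refine tsum_congr fun n => ?_
  rw [← tsum_mul_left]
  refine tsum_congr fun k => ?_
  rw [pow_add, pow_mul, mul_left_comm]

theorem trace_general_tensor_product_general {𝕜 : Type*} [RCLike 𝕜] {a : ℕ → 𝕜} {f : 𝕜 → 𝕜}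
    (ha : ∀ x : 𝕜, ‖x‖ < 1 → HasSum (fun k => a k * x ^ k) (f x))
    {l : ℕ} (hl : l ≠ 0) {q : 𝕜} (hq : ‖q‖ < 1) :
    Summable (fun nk : ℕ × ℕ => a nk.2 * q ^ (l * (nk.1 ^ 2 + (2 * nk.1 + 1) * nk.2))) ∧
    ∑' nk : ℕ × ℕ, a nk.2 * q ^ (l * (nk.1 ^ 2 + (2 * nk.1 + 1) * nk.2)) =
      ∑' n : ℕ, q ^ (l * n ^ 2) * f (q ^ (l * (2 * n + 1))) := by
  have norm_pow_lt_one {y : 𝕜} (hy : ‖y‖ < 1) {m : ℕ} (hm : m ≠ 0) : ‖y ^ m‖ < 1 := by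
    simpa only [norm_pow] using pow_lt_one₀ (norm_nonneg y) hy hm
  have hql : ‖q ^ l‖ < 1 := norm_pow_lt_one hq hl
  have habs : Summable fun k => ‖a k * (q ^ l) ^ k‖ := (ha _ hql).summable.norm
  simp only [pow_mul q l]
  refine ⟨(summable_norm_mul_pow_sq_add hql habs).of_norm, ?_⟩
  rw [tsum_mul_pow_sq_add hql habs]
  refine tsum_congr fun n => ?_
  rw [(ha _ (norm_pow_lt_one hql (2 * n).succ_ne_zero)).tsum_eq]

theorem trace_general_tensor_product (p : ℕ) (hp : 1 ≤ p)
    (α β : Fin (p + 1) → ℕ) (a : ℕ → ℕ)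
    (ha : ∀ x : ℂ, ‖x‖ < 1 →
      Summable (fun k : ℕ => (a k : ℂ) * x ^ k) ∧
      (∑' k : ℕ, (a k : ℂ) * x ^ k) =
        (∏ i : Fin (p + 1), ((α i : ℂ) + (β i : ℂ) * x)) / (1 - x) ^ p)
    (l : ℕ) (hl : 0 < l) (q : ℂ)
    (hq0 : 0 < ‖q‖) (hq1 : ‖q‖ < 1) :
    Summable (fun pr : ℕ × ℕ =>
      (a pr.2 : ℂ) * q ^ (l * (pr.1 ^ 2 + (2 * pr.1 + 1) * pr.2))) ∧
    (∑' pr : ℕ × ℕ, (a pr.2 : ℂ) * q ^ (l * (pr.1 ^ 2 + (2 * pr.1 + 1) * pr.2))) =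
      ∑' n : ℕ, q ^ (l * n ^ 2) *
        (∏ i : Fin (p + 1), ((α i : ℂ) + (β i : ℂ) * q ^ (l * (2 * n + 1)))) /
          (1 - q ^ (l * (2 * n + 1))) ^ p := by
  simpa only [mul_div_assoc] using trace_general_tensor_product_general
    (fun x hx => (ha x hx).1.hasSum_iff.2 (ha x hx).2) hl.ne' hq1
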